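/- Let G be a non-complete simple graph and r ≥ 0 a real number. If μ_2/μ_n ≥ r/(r+1), then G is r-tough, i.e., for every vertex set S with c(G−S) > 1 we have |S| ≥ r·c(G−S). -/

import Mathlib

open SimpleGraph Matrix

/-- The (unordered) eigenvalues of the Laplacian matrix `L = D - A` of `G`. -/
noncomputable def lapEigs {V : Type*} [Fintype V] [DecidableEq V]
    (G : SimpleGraph V) [DecidableRel G.Adj] : V → ℝ :=
  (SimpleGraph.posSemidef_lapMatrix ℝ G).1.eigenvalues

/-- `μ : Fin n → ℝ` is the nondecreasing list of the Laplacian eigenvalues of `G`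
(so `μ 0 = μ_1 ≤ μ 1 = μ_2 ≤ … ≤ μ (n-1) = μ_n`). -/
def IsLapSpectrum {V : Type*} [Fintype V] [DecidableEq V]
    (G : SimpleGraph V) [DecidableRel G.Adj] {n : ℕ} (μ : Fin n → ℝ) : Prop :=
  Monotone μ ∧ ∃ σ : Fin n ≃ V, ∀ i, μ i = lapEigs G (σ i)

/-- The number of connected components of `G - S`. -/
noncomputable def numComp {V : Type*} (G : SimpleGraph V) (S : Finset V) : ℕ :=
  Nat.card (G.induce ((↑S : Set V)ᶜ)).ConnectedComponent

/-!
Let `n = |V|`, let `K` be the Laplacian of the complete graph on `V` and `L` that of `G`. Since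
`K` is `n` times the projection along the constants, `μ₂ K ≤ n L ≤ μₙ K` in the Loewner order.

Let `c ≥ 2`, let `C₁, …, C_c` be the components of `G - S`, and let `s = |S|`, `nᵢ = |Cᵢ|` and
`t = ∑ nᵢ = n - s`. The value of a Laplacian form at an indicator vector counts the edges leaving
the set, so the form of `L` is additive over the `Cᵢ`: if `e` is its value at
`1_{C₁} + ⋯ + 1_{C_c}`, then `e` is also the sum of its values at the `1_{Cᵢ}`.
The form of `n L - μ₂ K` is convex, so its value at the sum of the `1_{Cᵢ}` is at most `c` times
the sum of its values at the `1_{Cᵢ}`. As the form of `K` at the indicator of a set `X` is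
`|X| (n - |X|)`, this reads `μ₂ (c ∑ nᵢ (n - nᵢ) - t s) ≤ (c - 1) n e`. Now `nᵢ ≤ t - (c - 1)`
bounds the left bracket below by `(c - 1) t (s + c)`, while `n e ≤ μₙ t s`. Cancelling
`(c - 1) t` gives `μ₂ (s + c) ≤ μₙ s`.
-/

open scoped MatrixOrder

section QuadraticForm

variable {V : Type*} [Fintype V]

theorem mulVec_dotProduct_of_isSymm {R : Type*} [CommSemiring R] {A : Matrix V V R}
    (hA : A.IsSymm) (x y : V → R) : (A *ᵥ x) ⬝ᵥ y = x ⬝ᵥ A *ᵥ y := by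
  rw [dotProduct_mulVec, ← mulVec_transpose, hA.eq]

theorem dotProduct_mulVec_le_of_le {A B : Matrix V V ℝ} (h : A ≤ B) (x : V → ℝ) :
    x ⬝ᵥ A *ᵥ x ≤ x ⬝ᵥ B *ᵥ x := by
  have hnonneg := (Matrix.le_iff.mp h).dotProduct_mulVec_nonneg x
  rwa [star_trivial, sub_mulVec, dotProduct_sub, sub_nonneg] at hnonneg

theorem le_of_forall_dotProduct_mulVec_le {A B : Matrix V V ℝ} (hA : A.IsHermitian)
    (hB : B.IsHermitian) (h : ∀ x : V → ℝ, x ⬝ᵥ A *ᵥ x ≤ x ⬝ᵥ B *ᵥ x) : A ≤ B := by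
  refine Matrix.le_iff.mpr (.of_dotProduct_mulVec_nonneg (hB.sub hA) fun x ↦ ?_)
  rw [star_trivial, sub_mulVec, dotProduct_sub, sub_nonneg]
  exact h x

theorem sum_dotProduct_mulVec_sum_le {ι : Type*} [Fintype ι] {P : Matrix V V ℝ} (hP : 0 ≤ P)
    (v : ι → V → ℝ) :
    (∑ i, v i) ⬝ᵥ P *ᵥ ∑ i, v i ≤ Fintype.card ι * ∑ i, v i ⬝ᵥ P *ᵥ v i := by
  classical
  obtain ⟨B, rfl⟩ := CStarAlgebra.nonneg_iff_eq_star_mul_self.mp hP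
  have form_eq (x : V → ℝ) : x ⬝ᵥ (star B * B) *ᵥ x = ∑ k, (B *ᵥ x) k ^ 2 := by
    rw [← mulVec_mulVec, star_eq_conjTranspose, conjTranspose_eq_transpose_of_trivial,
      dotProduct_mulVec, vecMul_transpose]
    simp only [dotProduct, sq]
  simp_rw [form_eq, mulVec_sum, Finset.sum_apply]
  rw [Finset.sum_comm, Finset.mul_sum]
  exact Finset.sum_le_sum fun k _ ↦ sq_sum_le_card_mul_sum_sq

end QuadraticForm

section Spectral

variable {V : Type*} [Fintype V] [DecidableEq V] {A : Matrix V V ℝ}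

theorem sum_eigenvectorBasis_dotProduct_mul (hA : A.IsHermitian) (x y : V → ℝ) :
    ∑ i, (hA.eigenvectorBasis i : V → ℝ) ⬝ᵥ x * (hA.eigenvectorBasis i : V → ℝ) ⬝ᵥ y = x ⬝ᵥ y := by
  have h := hA.eigenvectorBasis.sum_inner_mul_inner (WithLp.toLp 2 x) (WithLp.toLp 2 y)
  simp only [EuclideanSpace.inner_eq_star_dotProduct] at h
  simpa [dotProduct_comm] using h

theorem eigenvectorBasis_dotProduct_mulVec (hA : A.IsHermitian) (i : V) (x : V → ℝ) :
    (hA.eigenvectorBasis i : V → ℝ) ⬝ᵥ A *ᵥ x =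
      hA.eigenvalues i * (hA.eigenvectorBasis i : V → ℝ) ⬝ᵥ x := by
  have hsymm : A.IsSymm := by simpa using hA
  rw [← mulVec_dotProduct_of_isSymm hsymm, hA.mulVec_eigenvectorBasis, smul_dotProduct,
    smul_eq_mul]

theorem dotProduct_mulVec_eq_sum_eigenvalues_mul_sq (hA : A.IsHermitian) (x : V → ℝ) :
    x ⬝ᵥ A *ᵥ x = ∑ i, hA.eigenvalues i * ((hA.eigenvectorBasis i : V → ℝ) ⬝ᵥ x) ^ 2 := by
  rw [← sum_eigenvectorBasis_dotProduct_mul hA]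
  refine Finset.sum_congr rfl fun i _ ↦ ?_
  rw [eigenvectorBasis_dotProduct_mulVec]
  ring

theorem dotProduct_mulVec_le_of_eigenvalues_le (hA : A.IsHermitian) {b : ℝ}
    (hb : ∀ i, hA.eigenvalues i ≤ b) (x : V → ℝ) : x ⬝ᵥ A *ᵥ x ≤ b * x ⬝ᵥ x := by
  rw [dotProduct_mulVec_eq_sum_eigenvalues_mul_sq hA, ← sum_eigenvectorBasis_dotProduct_mul hA x,
    Finset.mul_sum]
  refine Finset.sum_le_sum fun i _ ↦ ?_
  rw [← sq]
  exact mul_le_mul_of_nonneg_right (hb i) (sq_nonneg _)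

theorem le_dotProduct_mulVec_of_le_eigenvalues (hA : A.IsHermitian) {a : ℝ} {x : V → ℝ}
    (ha : ∀ i, (hA.eigenvectorBasis i : V → ℝ) ⬝ᵥ x ≠ 0 → a ≤ hA.eigenvalues i) :
    a * x ⬝ᵥ x ≤ x ⬝ᵥ A *ᵥ x := by
  rw [dotProduct_mulVec_eq_sum_eigenvalues_mul_sq hA, ← sum_eigenvectorBasis_dotProduct_mul hA x,
    Finset.mul_sum]
  refine Finset.sum_le_sum fun i _ ↦ ?_
  rw [← sq]
  by_cases hi : (hA.eigenvectorBasis i : V → ℝ) ⬝ᵥ x = 0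
  · simp [hi]
  · exact mul_le_mul_of_nonneg_right (ha i hi) (sq_nonneg _)

theorem eigenvectorBasis_dotProduct_eq_zero_of_orthogonal_ker (hA : A.IsHermitian) {i₀ : V}
    (hpos : ∀ i ≠ i₀, 0 < hA.eigenvalues i) {u x : V → ℝ} (hu : u ≠ 0) (hAu : A *ᵥ u = 0)
    (hux : u ⬝ᵥ x = 0) : (hA.eigenvectorBasis i₀ : V → ℝ) ⬝ᵥ x = 0 := by
  have hcoeff (i : V) (hi : i ≠ i₀) : (hA.eigenvectorBasis i : V → ℝ) ⬝ᵥ u = 0 := by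
    have h := eigenvectorBasis_dotProduct_mulVec hA i u
    rw [hAu, dotProduct_zero] at h
    exact (mul_eq_zero.mp h.symm).resolve_left (hpos i hi).ne'
  have hexpand (y : V → ℝ) :
      (hA.eigenvectorBasis i₀ : V → ℝ) ⬝ᵥ u * (hA.eigenvectorBasis i₀ : V → ℝ) ⬝ᵥ y = u ⬝ᵥ y := by
    rw [← sum_eigenvectorBasis_dotProduct_mul hA u y]
    rw [Fintype.sum_eq_single i₀ fun i hi ↦ by rw [hcoeff i hi, zero_mul]]
  refine (mul_eq_zero.mp ((hexpand x).trans hux)).resolve_left fun hzero ↦ hu ?_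
  rw [← dotProduct_self_eq_zero, ← hexpand, hzero, zero_mul]

theorem le_dotProduct_mulVec_of_orthogonal_ker (hA : A.PosSemidef) {a : ℝ} {i₀ : V}
    (ha : ∀ i ≠ i₀, a ≤ hA.1.eigenvalues i) {u x : V → ℝ} (hu : u ≠ 0) (hAu : A *ᵥ u = 0)
    (hux : u ⬝ᵥ x = 0) : a * x ⬝ᵥ x ≤ x ⬝ᵥ A *ᵥ x := by
  refine le_dotProduct_mulVec_of_le_eigenvalues hA.1 fun i hi ↦ ?_
  rcases le_or_gt a 0 with ha₀ | ha₀
  · exact ha₀.trans (hA.eigenvalues_nonneg i)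
  · refine ha i fun hii₀ ↦ hi (hii₀ ▸ ?_)
    exact eigenvectorBasis_dotProduct_eq_zero_of_orthogonal_ker hA.1
      (fun j hj ↦ ha₀.trans_le (ha j hj)) hu hAu hux

end Spectral

section Laplacian

variable {V : Type*} [Fintype V] [DecidableEq V]

theorem lapMatrix_top_eq (R : Type*) [Ring R] :
    (⊤ : SimpleGraph V).lapMatrix R =
      (Fintype.card V : R) • (1 : Matrix V V R) - of fun _ _ ↦ 1 := by
  ext u v
  have hcard : 1 ≤ Fintype.card V := Fintype.card_pos_iff.mpr ⟨u⟩
  by_cases huv : u = v <;>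
    simp [lapMatrix, degMatrix, huv, hcard]

variable {R : Type*} [CommRing R] (G : SimpleGraph V) [DecidableRel G.Adj]

theorem lapMatrix_mul_lapMatrix_top :
    G.lapMatrix R * (⊤ : SimpleGraph V).lapMatrix R = (Fintype.card V : R) • G.lapMatrix R := by
  have hconst : G.lapMatrix R * of (fun _ _ : V ↦ (1 : R)) = 0 := by
    ext u _
    exact congrFun G.lapMatrix_mulVec_const_eq_zero u
  rw [lapMatrix_top_eq, mul_sub, hconst, sub_zero, mul_smul_comm, mul_one]

theorem lapMatrix_top_mul_lapMatrix :
    (⊤ : SimpleGraph V).lapMatrix R * G.lapMatrix R = (Fintype.card V : R) • G.lapMatrix R := by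
  have h := congrArg transpose (lapMatrix_mul_lapMatrix_top (R := R) G)
  rwa [transpose_mul, transpose_smul, (G.isSymm_lapMatrix R).eq,
    (isSymm_lapMatrix R ⊤).eq] at h

theorem lapMatrix_top_mulVec_dotProduct_self (x : V → R) :
    ((⊤ : SimpleGraph V).lapMatrix R *ᵥ x) ⬝ᵥ ((⊤ : SimpleGraph V).lapMatrix R *ᵥ x) =
      Fintype.card V * x ⬝ᵥ (⊤ : SimpleGraph V).lapMatrix R *ᵥ x := by
  rw [mulVec_dotProduct_of_isSymm (isSymm_lapMatrix R ⊤), mulVec_mulVec,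
    lapMatrix_mul_lapMatrix_top, smul_mulVec, dotProduct_smul, smul_eq_mul]

theorem lapMatrix_top_mulVec_dotProduct_lapMatrix_mulVec (x : V → R) :
    ((⊤ : SimpleGraph V).lapMatrix R *ᵥ x) ⬝ᵥ
        G.lapMatrix R *ᵥ ((⊤ : SimpleGraph V).lapMatrix R *ᵥ x) =
      Fintype.card V * (Fintype.card V * x ⬝ᵥ G.lapMatrix R *ᵥ x) := by
  simp only [mulVec_dotProduct_of_isSymm (isSymm_lapMatrix R ⊤), mulVec_mulVec,
    lapMatrix_mul_lapMatrix_top, lapMatrix_top_mul_lapMatrix, smul_mulVec, mulVec_smul,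
    dotProduct_smul, smul_eq_mul]

theorem isHermitian_smul_lapMatrix (a : ℝ) : (a • G.lapMatrix ℝ).IsHermitian :=
  (G.isHermitian_lapMatrix ℝ).smul (IsSelfAdjoint.all a)

theorem card_smul_lapMatrix_le_smul_lapMatrix_top {b : ℝ} (hb : ∀ v, lapEigs G v ≤ b) :
    (Fintype.card V : ℝ) • G.lapMatrix ℝ ≤ b • (⊤ : SimpleGraph V).lapMatrix ℝ := by
  refine le_of_forall_dotProduct_mulVec_le (isHermitian_smul_lapMatrix _ _)
    (isHermitian_smul_lapMatrix _ _) fun x ↦ ?_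
  rcases isEmpty_or_nonempty V with _ | _
  · simp
  have hcard : (0 : ℝ) < Fintype.card V := by exact_mod_cast Fintype.card_pos
  have h := dotProduct_mulVec_le_of_eigenvalues_le (posSemidef_lapMatrix ℝ G).1 hb
    ((⊤ : SimpleGraph V).lapMatrix ℝ *ᵥ x)
  rw [lapMatrix_top_mulVec_dotProduct_lapMatrix_mulVec, lapMatrix_top_mulVec_dotProduct_self,
    mul_left_comm b] at h
  simpa only [smul_mulVec, dotProduct_smul, smul_eq_mul] using le_of_mul_le_mul_left h hcard

theorem smul_lapMatrix_top_le_card_smul_lapMatrix {a : ℝ} {v₀ : V}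
    (ha : ∀ v ≠ v₀, a ≤ lapEigs G v) :
    a • (⊤ : SimpleGraph V).lapMatrix ℝ ≤ (Fintype.card V : ℝ) • G.lapMatrix ℝ := by
  refine le_of_forall_dotProduct_mulVec_le (isHermitian_smul_lapMatrix _ _)
    (isHermitian_smul_lapMatrix _ _) fun x ↦ ?_
  have hcard : (0 : ℝ) < Fintype.card V := by exact_mod_cast Fintype.card_pos_iff.mpr ⟨v₀⟩
  have horth : (fun _ ↦ 1 : V → ℝ) ⬝ᵥ (⊤ : SimpleGraph V).lapMatrix ℝ *ᵥ x = 0 := by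
    rw [← mulVec_dotProduct_of_isSymm (isSymm_lapMatrix ℝ ⊤), lapMatrix_mulVec_const_eq_zero,
      zero_dotProduct]
  have h := le_dotProduct_mulVec_of_orthogonal_ker (posSemidef_lapMatrix ℝ G) ha
    (fun h1 ↦ one_ne_zero (congrFun h1 v₀)) G.lapMatrix_mulVec_const_eq_zero horth
  rw [lapMatrix_top_mulVec_dotProduct_lapMatrix_mulVec, lapMatrix_top_mulVec_dotProduct_self,
    mul_left_comm] at h
  simpa only [smul_mulVec, dotProduct_smul, smul_eq_mul] using le_of_mul_le_mul_left h hcard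

end Laplacian

namespace IsLapSpectrum

variable {V : Type*} [Fintype V] [DecidableEq V] {G : SimpleGraph V} [DecidableRel G.Adj]
  {n : ℕ} {μ : Fin n → ℝ}

theorem nonneg (hμ : IsLapSpectrum G μ) (i : Fin n) : 0 ≤ μ i := by
  obtain ⟨-, σ, hσ⟩ := hμ
  rw [hσ]
  exact (posSemidef_lapMatrix ℝ G).eigenvalues_nonneg _

theorem lapEigs_le_last (hμ : IsLapSpectrum G μ) (hn : n - 1 < n) (v : V) :
    lapEigs G v ≤ μ ⟨n - 1, hn⟩ := by
  obtain ⟨hmono, σ, hσ⟩ := hμ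
  rw [← σ.apply_symm_apply v, ← hσ]
  exact hmono (Fin.le_def.mpr (Nat.le_pred_of_lt (σ.symm v).isLt))

theorem exists_second_le_lapEigs (hμ : IsLapSpectrum G μ) (hn : 1 < n) :
    ∃ v₀, ∀ v ≠ v₀, μ ⟨1, hn⟩ ≤ lapEigs G v := by
  obtain ⟨hmono, σ, hσ⟩ := hμ
  refine ⟨σ ⟨0, by lia⟩, fun v hv ↦ ?_⟩
  rw [← σ.apply_symm_apply v, ← hσ]
  refine hmono (Fin.le_def.mpr (Nat.one_le_iff_ne_zero.mpr fun hzero ↦ hv ?_))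
  rw [← σ.symm_apply_eq]
  exact Fin.ext hzero

end IsLapSpectrum

section Separated

variable {V ι : Type*} {C : ι → Finset V}

theorem indicator_biUnion_eq_sum_of_pairwise_disjoint [DecidableEq V] [Fintype ι] {R : Type*}
    [AddCommMonoidWithOne R] (hC : Pairwise fun i j ↦ Disjoint (C i) (C j)) :
    (↑(Finset.univ.biUnion C) : Set V).indicator (1 : V → R) =
      ∑ i, (C i : Set V).indicator 1 := by
  ext v
  rw [Finset.coe_biUnion, Finset.sum_apply]
  exact Finset.indicator_biUnion_apply _ _
    (fun i _ j _ hij ↦ Finset.disjoint_coe.mpr (hC hij)) v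

/-- The members of the family `C` are pairwise disjoint, and no edge of `G` joins two of them. -/
def PairwiseSeparated (G : SimpleGraph V) (C : ι → Finset V) : Prop :=
  Pairwise fun i j ↦ ∀ u ∈ C i, ∀ v ∈ C j, u ≠ v ∧ ¬ G.Adj u v

theorem PairwiseSeparated.pairwise_disjoint {G : SimpleGraph V} (hC : PairwiseSeparated G C) :
    Pairwise fun i j ↦ Disjoint (C i) (C j) :=
  fun _ _ hij ↦ Finset.disjoint_left.mpr fun _ hi hj ↦ (hC hij _ hi _ hj).1 rfl

end Separated

section Cut

variable {V : Type*} [Fintype V] [DecidableEq V] (G : SimpleGraph V) [DecidableRel G.Adj]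

/-- The number of edges of `G` with exactly one endpoint in `X`, encoded as the value of the
Laplacian quadratic form at the indicator vector of `X`. -/
noncomputable def cutSize (X : Finset V) : ℝ :=
  (X : Set V).indicator 1 ⬝ᵥ G.lapMatrix ℝ *ᵥ (X : Set V).indicator 1

theorem cutSize_top (X : Finset V) :
    cutSize (⊤ : SimpleGraph V) X = X.card * (Fintype.card V - X.card) := by
  have hsum : ∑ v, (X : Set V).indicator (1 : V → ℝ) v = X.card := by
    simp [Set.indicator_apply]
  have hself : (X : Set V).indicator 1 ⬝ᵥ (X : Set V).indicator 1 = (X.card : ℝ) := by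
    simp [dotProduct, Set.indicator_apply]
  have hones : of (fun _ _ : V ↦ (1 : ℝ)) *ᵥ (X : Set V).indicator 1 = fun _ ↦ (X.card : ℝ) := by
    ext v
    simp [mulVec, dotProduct, hsum]
  rw [cutSize, lapMatrix_top_eq, sub_mulVec, dotProduct_sub, smul_mulVec, one_mulVec,
    dotProduct_smul, hself, hones, smul_eq_mul]
  simp only [dotProduct, ← Finset.sum_mul, hsum]
  ring

theorem indicator_dotProduct_lapMatrix_mulVec_indicator_eq_zero {R : Type*} [CommRing R]
    {X Y : Finset V} (h : ∀ u ∈ X, ∀ v ∈ Y, u ≠ v ∧ ¬ G.Adj u v) :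
    (X : Set V).indicator 1 ⬝ᵥ G.lapMatrix R *ᵥ (Y : Set V).indicator 1 = 0 := by
  refine Finset.sum_eq_zero fun u _ ↦ ?_
  by_cases hu : u ∈ X
  · refine mul_eq_zero_of_right _ (Finset.sum_eq_zero fun v _ ↦ ?_)
    by_cases hv : v ∈ Y
    · obtain ⟨hne, hnadj⟩ := h u hu v hv
      simp [lapMatrix, degMatrix, hne, hnadj]
    · simp [hv]
  · simp [hu]

variable {G} {ι : Type*} [Fintype ι] {C : ι → Finset V}

theorem PairwiseSeparated.cutSize_biUnion (hC : PairwiseSeparated G C) :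
    cutSize G (Finset.univ.biUnion C) = ∑ i, cutSize G (C i) := by
  rw [cutSize, indicator_biUnion_eq_sum_of_pairwise_disjoint hC.pairwise_disjoint, sum_dotProduct]
  refine Finset.sum_congr rfl fun i _ ↦ ?_
  rw [mulVec_sum, dotProduct_sum]
  exact Fintype.sum_eq_single i fun j hji ↦
    indicator_dotProduct_lapMatrix_mulVec_indicator_eq_zero G (hC hji.symm)

theorem PairwiseSeparated.mul_cutSize_top_sub_le (hC : PairwiseSeparated G C) {a : ℝ}
    (ha : a • (⊤ : SimpleGraph V).lapMatrix ℝ ≤ (Fintype.card V : ℝ) • G.lapMatrix ℝ) :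
    a * (Fintype.card ι * ∑ i, cutSize ⊤ (C i) - cutSize ⊤ (Finset.univ.biUnion C)) ≤
      (Fintype.card ι - 1) * (Fintype.card V * cutSize G (Finset.univ.biUnion C)) := by
  have h := sum_dotProduct_mulVec_sum_le (sub_nonneg.mpr ha)
    fun i ↦ (C i : Set V).indicator (1 : V → ℝ)
  simp only [← indicator_biUnion_eq_sum_of_pairwise_disjoint hC.pairwise_disjoint, sub_mulVec,
    smul_mulVec, dotProduct_sub, dotProduct_smul, smul_eq_mul, ← cutSize.eq_def,
    Finset.sum_sub_distrib, ← Finset.mul_sum, ← hC.cutSize_biUnion] at h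
  linarith

end Cut

section Toughness

theorem add_card_le_sum_add_one {ι : Type*} [Fintype ι] {f : ι → ℕ} (hf : ∀ i, 1 ≤ f i) (i : ι) :
    f i + Fintype.card ι ≤ ∑ j, f j + 1 := by
  classical
  have hrest : (Finset.univ.erase i).card ≤ ∑ j ∈ Finset.univ.erase i, f j := by
    simpa using Finset.card_nsmul_le_sum (Finset.univ.erase i) f 1 fun j _ ↦ hf j
  rw [Finset.card_erase_of_mem (Finset.mem_univ i), Finset.card_univ] at hrest
  have hsplit := Finset.add_sum_erase Finset.univ f (Finset.mem_univ i)
  lia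

theorem sum_mul_add_card_le {ι : Type*} [Fintype ι] {f : ι → ℕ} (hf : ∀ i, 1 ≤ f i) :
    ∑ i, f i * (f i + Fintype.card ι) ≤ (∑ i, f i) * (∑ i, f i + 1) := by
  rw [Finset.sum_mul]
  exact Finset.sum_le_sum fun i _ ↦ Nat.mul_le_mul_left _ (add_card_le_sum_add_one hf i)

variable {V ι : Type*} [Fintype V] [DecidableEq V] [Fintype ι] {C : ι → Finset V}

theorem le_card_mul_sum_cutSize_top_sub_cutSize_top_biUnion
    (hC : Pairwise fun i j ↦ Disjoint (C i) (C j)) (hne : ∀ i, (C i).Nonempty) :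
    ((Fintype.card ι - 1) * (Finset.univ.biUnion C).card *
        ((Finset.univ.biUnion C)ᶜ.card + Fintype.card ι) : ℝ) ≤
      Fintype.card ι * ∑ i, cutSize ⊤ (C i) - cutSize ⊤ (Finset.univ.biUnion C) := by
  have hcardT : (Finset.univ.biUnion C).card = ∑ i, (C i).card :=
    Finset.card_biUnion fun _ _ _ _ hij ↦ hC hij
  have hsize : (∑ i, (C i).card * ((C i).card + Fintype.card ι) : ℝ) ≤
      (Finset.univ.biUnion C).card * ((Finset.univ.biUnion C).card + 1) := by
    rw [hcardT]
    exact_mod_cast sum_mul_add_card_le fun i ↦ (hne i).card_pos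
  have hcard : (Fintype.card V : ℝ) =
      (Finset.univ.biUnion C).card + (Finset.univ.biUnion C)ᶜ.card := by
    exact_mod_cast (Finset.card_add_card_compl _).symm
  have hsum : (∑ i, (C i).card : ℝ) = (Finset.univ.biUnion C).card := by
    exact_mod_cast hcardT.symm
  simp only [cutSize_top, hcard, mul_add, mul_sub, Finset.sum_add_distrib, Finset.sum_sub_distrib,
    ← Finset.sum_mul, hsum] at hsize ⊢
  have h := mul_le_mul_of_nonneg_left hsize (Nat.cast_nonneg (α := ℝ) (Fintype.card ι))
  linarith

theorem PairwiseSeparated.mul_card_compl_add_card_le {G : SimpleGraph V} [DecidableRel G.Adj]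
    (hC : PairwiseSeparated G C) (hne : ∀ i, (C i).Nonempty) (hι : 2 ≤ Fintype.card ι)
    {a b : ℝ} (ha : 0 ≤ a)
    (hlower : a • (⊤ : SimpleGraph V).lapMatrix ℝ ≤ (Fintype.card V : ℝ) • G.lapMatrix ℝ)
    (hupper : (Fintype.card V : ℝ) • G.lapMatrix ℝ ≤ b • (⊤ : SimpleGraph V).lapMatrix ℝ) :
    a * ((Finset.univ.biUnion C)ᶜ.card + Fintype.card ι) ≤
      b * (Finset.univ.biUnion C)ᶜ.card := by
  set T := Finset.univ.biUnion C
  have hι' : (0 : ℝ) < Fintype.card ι - 1 := by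
    have : (2 : ℝ) ≤ Fintype.card ι := by exact_mod_cast hι
    linarith
  have hTpos : (0 : ℝ) < T.card := by
    obtain ⟨i⟩ : Nonempty ι := Fintype.card_pos_iff.mp (by lia)
    exact_mod_cast ((hne i).mono (Finset.subset_biUnion_of_mem C (Finset.mem_univ i))).card_pos
  have hcut : Fintype.card V * cutSize G T ≤ b * (T.card * Tᶜ.card) := by
    have h := dotProduct_mulVec_le_of_le hupper ((T : Set V).indicator 1)
    simp only [smul_mulVec, dotProduct_smul, smul_eq_mul, ← cutSize.eq_def] at h
    rwa [cutSize_top, ← Nat.cast_sub T.card_le_univ, ← Finset.card_compl] at h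
  refine le_of_mul_le_mul_left ?_ (mul_pos hι' hTpos)
  calc ((Fintype.card ι - 1) * T.card * (a * (Tᶜ.card + Fintype.card ι)) : ℝ)
      = a * ((Fintype.card ι - 1) * T.card * (Tᶜ.card + Fintype.card ι)) := by ring
    _ ≤ a * (Fintype.card ι * ∑ i, cutSize ⊤ (C i) - cutSize ⊤ T) :=
        mul_le_mul_of_nonneg_left
          (le_card_mul_sum_cutSize_top_sub_cutSize_top_biUnion hC.pairwise_disjoint hne) ha
    _ ≤ (Fintype.card ι - 1) * (Fintype.card V * cutSize G T) := hC.mul_cutSize_top_sub_le hlower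
    _ ≤ (Fintype.card ι - 1) * (b * (T.card * Tᶜ.card)) := mul_le_mul_of_nonneg_left hcut hι'.le
    _ = (Fintype.card ι - 1) * T.card * (b * Tᶜ.card) := by ring

end Toughness

section Components

variable {V : Type*} [Finite V] (G : SimpleGraph V) (S : Finset V)

/-- The vertex set, in `V`, of a connected component of `G - S`. -/
noncomputable def componentVerts
    (K : (G.induce ((S : Set V)ᶜ)).ConnectedComponent) : Finset V :=
  (Subtype.val '' K.supp).toFinite.toFinset

variable {G S}

theorem mem_componentVerts {K : (G.induce ((S : Set V)ᶜ)).ConnectedComponent} {v : V} :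
    v ∈ componentVerts G S K ↔
      ∃ hv : v ∈ (S : Set V)ᶜ, (G.induce ((S : Set V)ᶜ)).connectedComponentMk ⟨v, hv⟩ = K := by
  simp [componentVerts]

variable (G S)

theorem componentVerts_nonempty (K : (G.induce ((S : Set V)ᶜ)).ConnectedComponent) :
    (componentVerts G S K).Nonempty := by
  obtain ⟨v, hv⟩ := K.nonempty_supp
  exact ⟨v, mem_componentVerts.mpr ⟨v.2, hv⟩⟩

theorem pairwiseSeparated_componentVerts : PairwiseSeparated G (componentVerts G S) := by
  intro K K' hne u hu v hv
  obtain ⟨huS, rfl⟩ := mem_componentVerts.mp hu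
  obtain ⟨hvS, rfl⟩ := mem_componentVerts.mp hv
  refine ⟨fun huv ↦ hne (by simp only [huv]), fun hadj ↦ hne ?_⟩
  exact ConnectedComponent.connectedComponentMk_eq_of_adj (induce_adj.mpr hadj)

end Components

theorem biUnion_componentVerts {V : Type*} [Fintype V] [DecidableEq V] (G : SimpleGraph V)
    (S : Finset V) [Fintype (G.induce ((S : Set V)ᶜ)).ConnectedComponent] :
    Finset.univ.biUnion (componentVerts G S) = Sᶜ := by
  ext v
  simp [mem_componentVerts]

theorem IsLapSpectrum.second_mul_card_add_numComp_le {V : Type*} [Fintype V] [DecidableEq V]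
    {G : SimpleGraph V} [DecidableRel G.Adj] {n : ℕ} (hn : 2 ≤ n) {μ : Fin n → ℝ}
    (hμ : IsLapSpectrum G μ) {S : Finset V} (hdis : 2 ≤ numComp G S) :
    μ ⟨1, by lia⟩ * (S.card + numComp G S) ≤ μ ⟨n - 1, by lia⟩ * S.card := by
  have := Fintype.ofFinite (G.induce ((S : Set V)ᶜ)).ConnectedComponent
  obtain ⟨v₀, hv₀⟩ := hμ.exists_second_le_lapEigs hn
  rw [numComp, Nat.card_eq_fintype_card] at hdis ⊢
  have h := (pairwiseSeparated_componentVerts G S).mul_card_compl_add_card_le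
    (componentVerts_nonempty G S) hdis (hμ.nonneg _)
    (smul_lapMatrix_top_le_card_smul_lapMatrix G hv₀)
    (card_smul_lapMatrix_le_smul_lapMatrix_top G (hμ.lapEigs_le_last (by lia)))
  rwa [biUnion_componentVerts, compl_compl] at h

theorem mul_le_of_div_add_one_le_div {a b c r s : ℝ} (hb : 0 ≤ b) (hr : 0 ≤ r) (hc : 0 ≤ c)
    (hs : 0 ≤ s) (hratio : r / (r + 1) ≤ a / b) (h : a * (s + c) ≤ b * s) : r * c ≤ s := by
  have hr₁ : 0 < r + 1 := by linarith
  rcases hb.eq_or_lt with rfl | hb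
  · -- Here `a / 0 = 0`, so the hypothesis forces `r = 0`.
    have hr₀ : r ≤ 0 := by simpa using (div_le_iff₀ hr₁).mp (hratio.trans_eq (div_zero a))
    simpa [le_antisymm hr₀ hr] using hs
  · rw [div_le_div_iff₀ hr₁ hb] at hratio
    have hscaled : b * (r * (s + c)) ≤ b * ((r + 1) * s) :=
      calc b * (r * (s + c)) = r * b * (s + c) := by ring
        _ ≤ a * (r + 1) * (s + c) := mul_le_mul_of_nonneg_right hratio (add_nonneg hs hc)
        _ = (r + 1) * (a * (s + c)) := by ring
        _ ≤ (r + 1) * (b * s) := mul_le_mul_of_nonneg_left h hr₁.le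
        _ = b * ((r + 1) * s) := by ring
    linarith [le_of_mul_le_mul_left hscaled hb]

theorem stmt12_general {V : Type*} [Fintype V] [DecidableEq V] {n : ℕ} (hn : 2 ≤ n)
    (G : SimpleGraph V) [DecidableRel G.Adj] (r : ℝ) (hr : 0 ≤ r) (μ : Fin n → ℝ)
    (hμ : IsLapSpectrum G μ)
    (hratio : r / (r + 1) ≤ μ ⟨1, by lia⟩ / μ ⟨n - 1, by lia⟩)
    (S : Finset V) (hdis : 2 ≤ numComp G S) :
    r * numComp G S ≤ (S.card : ℝ) :=
  mul_le_of_div_add_one_le_div (hμ.nonneg _) hr (Nat.cast_nonneg _) (Nat.cast_nonneg _) hratio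
    (hμ.second_mul_card_add_numComp_le hn hdis)

theorem stmt12 {n : ℕ} (hn : 2 ≤ n) (G : SimpleGraph (Fin n)) [DecidableRel G.Adj]
    (hnc : G ≠ ⊤) (r : ℝ) (hr : 0 ≤ r) (μ : Fin n → ℝ) (hμ : IsLapSpectrum G μ)
    (hratio : r / (r + 1) ≤ μ ⟨1, by omega⟩ / μ ⟨n - 1, by omega⟩)
    (S : Finset (Fin n)) (hdis : 2 ≤ numComp G S) :
    r * numComp G S ≤ (S.card : ℝ) :=
  stmt12_general hn G r hr μ hμ hratio S hdis
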